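/- For every integer n ≥ 7, the averaged-prime analogue of the Farhadian conjecture holds: (p̄_{n+1} / p̄_n)^n < (p_n / (2·ln p_n)) · ln(n/2). -/

import Mathlib

open Finset Real

/-- `nthPrime n` is the n-th prime number with 1-based indexing:
`nthPrime 1 = 2`, `nthPrime 2 = 3`, `nthPrime 3 = 5`, ... -/
noncomputable def nthPrime (n : ℕ) : ℕ := Nat.nth Nat.Prime (n - 1)

/-- The arithmetic average of the first `n` primes. -/
noncomputable def avgPrime (n : ℕ) : ℝ := (1 / (n : ℝ)) * ∑ i ∈ Finset.Icc 1 n, (nthPrime i : ℝ)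

/-- The gap in the averaged primes. -/
noncomputable def avgGap (n : ℕ) : ℝ := avgPrime (n + 1) - avgPrime n

/-- The averaged-prime counting function `π̄(x) = #{i ≥ 1 : p̄_i ≤ x}`. -/
noncomputable def avgPrimeCount (x : ℝ) : ℕ := Nat.card {i : ℕ | 1 ≤ i ∧ avgPrime i ≤ x}

/-- The ordinary prime counting function for a real argument. -/
noncomputable def primeCount (x : ℝ) : ℕ := Nat.card {q : ℕ | q.Prime ∧ (q : ℝ) ≤ x}

theorem infP : (Set.ofPred Nat.Prime).Infinite := Nat.infinite_setOfPred_prime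

noncomputable def PP (k : ℕ) : ℕ := Nat.nth Nat.Prime k
noncomputable def TT (n : ℕ) : ℕ := ∑ i ∈ Finset.range n, PP i

theorem PP_prime (k : ℕ) : (PP k).Prime := Nat.nth_mem_of_infinite infP k
theorem TT_succ (n : ℕ) : TT (n+1) = TT n + PP n := Finset.sum_range_succ _ _

theorem avg_eq (n : ℕ) : avgPrime n = (TT n : ℝ) / n := by
  have h : ∑ i ∈ Finset.Icc 1 n, (nthPrime i : ℝ) = (TT n : ℝ) := by
    induction n with
    | zero => simp [TT]
    | succ k ih =>
      rw [Finset.sum_Icc_succ_top (by omega), ih, TT_succ]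
      push_cast
      rfl
  unfold avgPrime
  rw [h, one_div, div_eq_inv_mul]

def Good (n : ℕ) : Prop :=
  5 * ((TT n + PP n) * n)^n < PP (n-1) * (TT n * (n+1))^n ∧ 32 * (PP (n-1))^2 < n^5

def isP (m : ℕ) : Bool := (List.range' 2 66).all fun d => Nat.blt 0 (m % d) || Nat.beq m d

theorem isP_iff (m : ℕ) (h2 : 2 ≤ m) (h : m < 68^2) : isP m = true ↔ m.Prime := by
  have key : isP m = true ↔ ∀ d, 2 ≤ d → d < 68 → d ∣ m → m = d := by
    unfold isP
    rw [List.all_eq_true]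
    constructor
    · intro H d h1 h3 h4
      have := H d (by rw [List.mem_range'_1]; omega)
      rw [Bool.or_eq_true] at this
      rcases this with h | h
      · rw [Nat.blt_eq] at h
        have := Nat.mod_eq_zero_of_dvd h4
        omega
      · exact Nat.eq_of_beq_eq_true h
    · intro H d hd
      rw [List.mem_range'_1] at hd
      rw [Bool.or_eq_true, Nat.blt_eq]
      by_cases h5 : d ∣ m
      · right
        rw [Nat.beq_eq]
        exact H d (by omega) (by omega) h5
      · left
        exact Nat.pos_of_ne_zero fun h6 => h5 (Nat.dvd_of_mod_eq_zero h6)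
  rw [key]
  constructor
  · intro H
    rw [Nat.prime_def_le_sqrt]
    refine ⟨h2, fun d hd hs hdv => ?_⟩
    have h7 : m.sqrt < 68 := Nat.sqrt_lt'.2 h
    have := H d hd (by omega) hdv
    have h8 : m.sqrt < m := Nat.sqrt_lt_self (by omega)
    omega
  · intro hp d hd _ hdv
    rcases (Nat.dvd_prime hp).1 hdv with h | h <;> omega

def chk : ℕ → ℕ → ℕ → ℕ → ℕ → Bool
  | 0, _, n, _, _ => Nat.ble 600 n
  | f+1, m, n, S, p =>
    bif isP m then
      (Nat.blt n 7 || (Nat.blt (5 * ((S + m) * n)^n) (p * (S * (n+1))^n) && Nat.blt (32 * p^2) (n^5)))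
        && chk f (m+1) (n+1) (S+m) m
    else chk f (m+1) n S p

theorem chk_sound (f : ℕ) : ∀ m, 2 ≤ m → m + f ≤ 68^2 →
    chk f m (Nat.count Nat.Prime m) (TT (Nat.count Nat.Prime m)) (PP (Nat.count Nat.Prime m - 1)) = true →
    ∀ n, 7 ≤ n → Nat.count Nat.Prime m ≤ n → n < 600 → Good n := by
  induction f with
  | zero =>
    intro m _ _ H n _ h1 h2
    rw [chk] at H
    have := Nat.le_of_ble_eq_true H
    omega
  | succ f ih =>
    intro m hm hf H n hn h1 h2
    rw [chk] at H
    by_cases hp : m.Prime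
    · rw [(isP_iff m hm (by omega)).2 hp, cond_true, Bool.and_eq_true] at H
      obtain ⟨Ha, Hb⟩ := H
      have hPm : PP (Nat.count Nat.Prime m) = m := Nat.nth_count hp
      have hc : Nat.count Nat.Prime (m+1) = Nat.count Nat.Prime m + 1 := by
        rw [Nat.count_succ, if_pos hp]
      rcases Nat.eq_or_lt_of_le h1 with h | h
      · subst h
        rw [Bool.or_eq_true, Bool.and_eq_true, Nat.blt_eq, Nat.blt_eq, Nat.blt_eq] at Ha
        rcases Ha with Ha | Ha
        · omega
        · unfold Good
          rw [hPm]; exact Ha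
      · refine ih (m+1) (by omega) (by omega) ?_ n hn (by omega) (by omega)
        rw [hc, TT_succ, hPm, Nat.add_sub_cancel, hPm]; exact Hb
    · have : isP m = false := by
        rw [← Bool.not_eq_true, isP_iff m hm (by omega)]; exact hp
      rw [this, cond_false] at H
      have hc : Nat.count Nat.Prime (m+1) = Nat.count Nat.Prime m := by
        rw [Nat.count_succ, if_neg hp, add_zero]
      refine ih (m+1) (by omega) (by omega) ?_ n hn (by omega) (by omega)
      rw [hc]; exact H

theorem PP0 : PP 0 = 2 := Nat.nth_prime_zero_eq_two

set_option maxRecDepth 100000 in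
theorem chk_run : chk 4500 2 0 0 2 = true := by decide +kernel

theorem good_small (n : ℕ) (hn : 7 ≤ n) (h : n < 600) : Good n := by
  refine chk_sound 4500 2 le_rfl (by norm_num) ?_ n hn ?_ (by omega)
  · have : Nat.count Nat.Prime 2 = 0 := by decide
    rw [this, show TT 0 = 0 from rfl, show 0 - 1 = 0 from rfl, PP0]
    exact chk_run
  · have : Nat.count Nat.Prime 2 = 0 := by decide
    omega

theorem PP_step (k : ℕ) (hk : 5 < PP k) : PP k + 30 ≤ PP (k + 8) := by
  refine (Nat.count_le_iff_le_nth infP).1 ?_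
  rw [Nat.count_eq_card_filter_range]
  have h0 : Nat.count Nat.Prime (PP k) = k := Nat.count_nth_of_infinite infP k
  rw [Nat.count_eq_card_filter_range] at h0
  have h1 := Nat.filter_coprime_Ico_eq_totient 30 (PP k)
  have h2 : Nat.totient 30 = 8 := by decide
  rw [h2] at h1
  calc _ ≤ ((Finset.range (PP k)).filter Nat.Prime ∪
      (Finset.Ico (PP k) (PP k + 30)).filter (Nat.Coprime 30)).card := by
        apply Finset.card_le_card
        intro x hx
        simp only [Finset.mem_filter, Finset.mem_range, Finset.mem_union, Finset.mem_Ico] at hx ⊢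
        by_cases h : x < PP k
        · left; exact ⟨h, hx.2⟩
        · right
          refine ⟨by omega, ?_⟩
          rw [Nat.coprime_comm, hx.2.coprime_iff_not_dvd]
          intro hd
          have : x ∣ 2 * (3 * 5) := hd
          rw [hx.2.dvd_mul, hx.2.dvd_mul] at this
          rcases this with h | h | h <;> have := Nat.le_of_dvd (by norm_num) h <;> omega
    _ ≤ _ := (Finset.card_union_le _ _).trans (by rw [h0, h1])

theorem PP_lower (k : ℕ) : 15 * k ≤ 4 * PP k + 29 := by
  induction k using Nat.strong_induction_on with
  | _ k ih =>
    by_cases hk : k < 11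
    · have h : ∀ k < 11, Nat.count Nat.Prime ((15 * k - 26) / 4) ≤ k := by decide
      have h2 := (Nat.count_le_iff_le_nth infP).1 (h k hk)
      unfold PP; omega
    · have h3 : 6 ≤ PP (k - 8) := by
        refine (Nat.count_le_iff_le_nth infP).1 ?_
        have : Nat.count Nat.Prime 6 = 3 := by decide
        omega
      have h4 := PP_step (k-8) h3
      rw [show k - 8 + 8 = k by omega] at h4
      have := ih (k-8) (by omega)
      omega

theorem TT_lower (n : ℕ) : 15 * n^2 ≤ 8 * TT n + 73 * n := by
  induction n with
  | zero => simp
  | succ n ih => rw [TT_succ]; have := PP_lower n; nlinarith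

theorem PP_lt (n : ℕ) (hn : 1 ≤ n) : PP (n-1) < PP n :=
  Nat.nth_strictMono infP (by omega)

theorem PP_bertrand (n : ℕ) (hn : 1 ≤ n) : PP n ≤ 2 * PP (n-1) := by
  obtain ⟨r, hr, h1, h2⟩ := Nat.exists_prime_lt_and_le_two_mul (PP (n-1)) (PP_prime _).ne_zero
  refine le_trans ?_ h2
  by_contra! h
  have h3 : Nat.nth Nat.Prime (Nat.count Nat.Prime r) = r := Nat.nth_count hr
  have h4 : Nat.count Nat.Prime r < n := by
    have := (Nat.nth_strictMono infP).lt_iff_lt (a := Nat.count Nat.Prime r) (b := n)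
    rw [h3] at this; exact this.1 h
  have h5 : n - 1 < Nat.count Nat.Prime r := by
    have := (Nat.nth_strictMono infP).lt_iff_lt (a := n-1) (b := Nat.count Nat.Prime r)
    rw [h3] at this; exact this.1 h1
  omega

theorem PP_upper (n : ℕ) (hn : 1 ≤ n) :
    ((PP n : ℝ) - 1) * Real.log 2 ≤ (n + 1) * Real.log (PP n) := by
  have h0 : Nat.count Nat.Prime (PP n) = n := Nat.count_nth_of_infinite infP n
  have h3 : 2 < PP n := lt_of_le_of_lt (PP_prime (n-1)).two_le (PP_lt n hn)
  have h := Chebyshev.pi_ge (PP n - 1)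
  rw [Nat.primeCounting_sub_one, Nat.primeCounting', h0] at h
  have h3' : (2:ℝ) < PP n := by exact_mod_cast h3
  rw [Nat.cast_sub (by omega), Nat.cast_one, sub_add_cancel] at h
  have hpos : 0 < Real.log ((PP n : ℝ) - 1) := Real.log_pos (by linarith)
  rw [div_le_iff₀ hpos] at h
  have h6 : Real.log ((PP n : ℝ) - 1) ≤ Real.log (PP n) := Real.log_le_log (by linarith) (by linarith)
  have : (n:ℝ) * Real.log ((PP n : ℝ) - 1) ≤ n * Real.log (PP n) := by gcongr
  linarith

theorem LHS_eq (n : ℕ) (hn : 1 ≤ n) : avgPrime (n+1) / avgPrime n =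
    ((TT n + PP n) * n : ℝ) / (TT n * (n+1)) := by
  rw [avg_eq, avg_eq, TT_succ]
  push_cast
  rw [div_div_div_eq]
  congr 1
  ring

theorem RHS_lower (n : ℕ) (hn : 3 ≤ n) (a b : ℕ) (hb : 0 < b)
    (h : 2^b * (PP (n-1))^a ≤ n^b) :
    (PP (n-1) : ℝ) / 2 * (a / b) ≤
      ((nthPrime n : ℝ) / (2 * Real.log (nthPrime n))) * Real.log ((n : ℝ) / 2) := by
  change _ ≤ ((PP (n-1) : ℝ) / (2 * Real.log (PP (n-1)))) * Real.log ((n : ℝ) / 2)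
  have hp : (2:ℝ) ≤ PP (n-1) := by exact_mod_cast (PP_prime (n-1)).two_le
  have hL : 0 < Real.log (PP (n-1)) := Real.log_pos (by linarith)
  have h' : ((PP (n-1) : ℝ))^a ≤ ((n:ℝ)/2)^b := by
    rw [div_pow, le_div_iff₀ (by positivity), mul_comm]
    exact_mod_cast h
  have h2 := Real.log_le_log (by positivity) h'
  rw [Real.log_pow, Real.log_pow] at h2
  have hb' : (0:ℝ) < b := by exact_mod_cast hb
  have h3 : (a:ℝ)/b ≤ Real.log ((n:ℝ)/2) / Real.log (PP (n-1)) := by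
    rw [div_le_div_iff₀ hb' hL]; linarith
  calc _ ≤ (PP (n-1) : ℝ) / 2 * (Real.log ((n:ℝ)/2) / Real.log (PP (n-1))) := by gcongr
    _ = _ := by field_simp

theorem TT_pos (n : ℕ) (hn : 1 ≤ n) : 0 < TT n := by
  obtain ⟨m, rfl⟩ : ∃ m, n = m + 1 := ⟨n-1, by omega⟩
  rw [TT_succ]; have := (PP_prime m).pos; omega

theorem main_small (n : ℕ) (hn : 7 ≤ n) (h : Good n) : (avgPrime (n + 1) / avgPrime n) ^ n <
      ((nthPrime n : ℝ) / (2 * Real.log (nthPrime n))) * Real.log ((n : ℝ) / 2) := by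
  refine lt_of_lt_of_le ?_ (RHS_lower n (by omega) 2 5 (by norm_num) h.2.le)
  rw [LHS_eq n (by omega)]
  have hT : (0:ℝ) < TT n := by exact_mod_cast TT_pos n (by omega)
  have h1 : 5 * (((TT n:ℝ) + PP n) * n)^n < PP (n-1) * (TT n * (n+1))^n := by exact_mod_cast h.1
  rw [div_pow, div_lt_iff₀ (by positivity)]
  push_cast
  linarith

theorem main_large (n : ℕ) (hn : 600 ≤ n) : (avgPrime (n + 1) / avgPrime n) ^ n <
      ((nthPrime n : ℝ) / (2 * Real.log (nthPrime n))) * Real.log ((n : ℝ) / 2) := by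
  have hT : (0:ℝ) < TT n := by exact_mod_cast TT_pos n (by omega)
  have hn' : (600:ℝ) ≤ n := by exact_mod_cast hn
  have hup := PP_upper n (by omega)
  have hTl : 15 * (n:ℝ)^2 ≤ 8 * TT n + 73 * n := by exact_mod_cast TT_lower n
  have hpl : (2239:ℝ) ≤ PP (n-1) := by
    have := PP_lower (n-1)
    have : 2239 ≤ PP (n-1) := by omega
    exact_mod_cast this
  have hb : (PP n : ℝ) ≤ 2 * PP (n-1) := by exact_mod_cast PP_bertrand n (by omega)
  have hlt : (PP (n-1) : ℝ) < PP n := by exact_mod_cast PP_lt n (by omega)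
  have hlog : Real.log (PP n) ≤ Real.log 2 + Real.log (PP (n-1)) := by
    rw [← Real.log_mul (by norm_num) (by linarith)]
    exact Real.log_le_log (by linarith) hb
  have l2 := Real.log_two_gt_d9
  have l2' := Real.log_two_lt_d9
  have hL : 7.5 ≤ Real.log (PP (n-1)) := by
    have h1 : (15:ℝ) ≤ Real.log ((PP (n-1) : ℝ)^2) := by
      rw [Real.le_log_iff_exp_le (by positivity)]
      calc Real.exp 15 = Real.exp 1 ^ 15 := by rw [← Real.exp_nat_mul]; norm_num
        _ ≤ 2.7182818286 ^ 15 := by gcongr; exact Real.exp_one_lt_d9.le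
        _ ≤ 2239^2 := by norm_num
        _ ≤ _ := by gcongr
    rw [Real.log_pow] at h1; push_cast at h1; linarith
  -- ratio
  have hratio : 2^3 * (PP (n-1))^1 ≤ n^3 := by
    have hs : Real.log (PP n) ≤ 2 * (√(PP n : ℝ) - 1) := by
      have h0 : 0 < √(PP n : ℝ) := Real.sqrt_pos.2 (by linarith)
      have := Real.log_le_sub_one_of_pos h0
      rw [Real.log_sqrt (by linarith)] at this
      linarith
    have hsq : √(PP n : ℝ) * √(PP n : ℝ) = PP n := Real.mul_self_sqrt (by linarith)
    have hs1 : 1 ≤ √(PP n : ℝ) := by rw [Real.one_le_sqrt]; linarith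
    generalize √(PP n : ℝ) = s at *
    have h1 : (s * s - 1) * Real.log 2 ≤ (n+1) * (2 * (s-1)) := by
      rw [hsq]; refine hup.trans ?_; gcongr
    have h2 : (s+1) * Real.log 2 ≤ (n+1) * 2 := by
      by_contra! h3
      have : 1 < s := by nlinarith
      nlinarith
    have h3 : s ≤ 3 * (n+1) := by nlinarith
    have h4 : (PP n : ℝ) ≤ 9 * (n+1)^2 := by rw [← hsq]; nlinarith
    have h5 : (2:ℝ)^3 * (PP (n-1))^1 ≤ n^3 := by nlinarith
    exact_mod_cast h5
  refine lt_of_lt_of_le ?_ (RHS_lower n (by omega) 1 3 (by norm_num) hratio)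
  rw [LHS_eq n (by omega)]
  set L := Real.log (PP (n-1)) with hLdef
  set q : ℝ := ((PP n : ℕ) : ℝ) with hq
  set p : ℝ := ((PP (n-1) : ℕ) : ℝ) with hp
  set T : ℝ := ((TT n : ℕ) : ℝ) with hTdef
  have e1 : (T + q) * n / (T * (n+1)) = (1 + q/T) / (1 + 1/n) := by field_simp
  rw [e1, div_pow]
  have b1 : (2:ℝ) ≤ (1 + 1/(n:ℝ))^n := by
    have := one_add_mul_le_pow (a := 1/(n:ℝ)) (by have : 0 ≤ 1/(n:ℝ) := by positivity
                                                  linarith) n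
    rw [mul_one_div_cancel (by positivity)] at this
    linarith
  have b2 : (1 + q/T)^n ≤ Real.exp (n * (q/T)) := by
    rw [Real.exp_nat_mul]
    have := Real.add_one_le_exp (q/T)
    have : 0 ≤ q/T := by positivity
    gcongr
    linarith
  -- exponent bound
  have b3 : n * (q/T) ≤ L - 1.1 := by
    have hq1 : q - 1 ≤ (n+1) * (1 + 1.4427 * L) := by
      have : (n+1) * Real.log q ≤ (n+1) * (Real.log 2 + L) := by gcongr
      have h6 : (q-1) * Real.log 2 ≤ (n+1) * (1 + 1.4427 * L) * Real.log 2 := by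
        have : L ≤ 1.4427 * L * Real.log 2 := by nlinarith
        have : (n+1) * (Real.log 2 + L) ≤ (n+1) * ((1 + 1.4427 * L) * Real.log 2) := by
          gcongr; linarith
        linarith
      exact le_of_mul_le_mul_right h6 (by linarith)
    rw [mul_div_assoc', div_le_iff₀ hT]
    have h7 : (n:ℝ) * (15 * n - 73) / 8 ≤ T := by nlinarith
    have h8 : (L - 1.1) * ((n:ℝ) * (15 * n - 73) / 8) ≤ (L - 1.1) * T := by
      apply mul_le_mul_of_nonneg_left h7; linarith
    refine le_trans ?_ h8
    have h9 : q ≤ (L - 1.1) * ((15 * n - 73) / 8) := by nlinarith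
    calc (n:ℝ) * q ≤ n * ((L - 1.1) * ((15 * n - 73) / 8)) := by gcongr
      _ = _ := by ring
  have b4 : Real.exp (L - 1.1) < p / 3 := by
    rw [Real.exp_sub, hLdef, Real.exp_log (by linarith)]
    have : (3:ℝ) < Real.exp 1.1 := by
      have h : (3:ℝ)^10 < Real.exp 1.1 ^ 10 := by
        rw [← Real.exp_nat_mul]
        calc (3:ℝ)^10 < 2.7182818283^11 := by norm_num
          _ ≤ Real.exp 1 ^ 11 := by gcongr; exact Real.exp_one_gt_d9.le
          _ = _ := by rw [← Real.exp_nat_mul]; norm_num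
      exact lt_of_pow_lt_pow_left₀ 10 (by positivity) h
    gcongr
  calc (1 + q/T)^n / (1 + 1/(n:ℝ))^n ≤ Real.exp (n * (q/T)) / 2 := by gcongr
    _ ≤ Real.exp (L - 1.1) / 2 := by gcongr
    _ < p / 3 / 2 := by gcongr
    _ = _ := by push_cast; ring

theorem stmt19 (n : ℕ) (hn : 7 ≤ n) :
    (avgPrime (n + 1) / avgPrime n) ^ n <
      ((nthPrime n : ℝ) / (2 * Real.log (nthPrime n))) * Real.log ((n : ℝ) / 2) := by
  by_cases h : n < 600
  · exact main_small n hn (good_small n hn h)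
  · exact main_large n (by omega)
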